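/- arXiv:2204.12350 — 4 statements merged into one kernel-verified Lean document; each statement's English description precedes it below -/
import Mathlib

section
/- Suppose p_k > 0 for infinitely many positive integers k. Then the ratio (Σ_{k≥1} p_k^2 (1−p_k)^v) / (Σ_{k≥1} p_k (1−p_k)^v) converges to 0 as v → ∞. -/
/-!
Fix a threshold `0 < δ < 1`. Letters with `p k ≤ δ` contribute to the numerator at most `δ` times
their contribution to the denominator, and letters with `p k > δ` contribute at most
`p k * (1 - δ) ^ v`, so that `numerator ≤ δ * denominator + (1 - δ) ^ v`. As infinitely many `p k`
are positive and `p k → 0`, some letter `j` has `0 < p j < δ`, whence the denominator is at least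
`p j * (1 - p j) ^ v`. This decays at a strictly slower geometric rate than `(1 - δ) ^ v`, so the
ratio is eventually below `2 * δ`.
-/

open Filter Topology

/-- Let `p` be a probability distribution on a countable alphabet
(indexed by `ℕ`).  If `p k > 0` for infinitely many `k`, then the ratio
`(Σ_k p_k^2 (1-p_k)^v) / (Σ_k p_k (1-p_k)^v)` converges to `0` as `v → ∞`. -/
theorem tail_ratio_tendsto_zero (p : ℕ → ℝ) (hp : ∀ k, 0 ≤ p k) (hsum : ∑' k, p k = 1)
    (hinf : {k | 0 < p k}.Infinite) :
    Tendsto (fun v : ℕ =>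
        (∑' k, (p k) ^ 2 * (1 - p k) ^ v) / (∑' k, p k * (1 - p k) ^ v))
      atTop (𝓝 0) := by
  -- A divergent `tsum` would be the junk value `0`, not `1`.
  have hs : Summable p := by
    by_contra h
    rw [tsum_eq_zero_of_not_summable h] at hsum
    exact zero_ne_one hsum
  have hp1 (k : ℕ) : p k ≤ 1 := hsum ▸ hs.le_tsum k (fun i _ => hp i)
  have hq (k v : ℕ) : 0 ≤ (1 - p k) ^ v := pow_nonneg (by linarith [hp1 k]) v
  have hq1 (k v : ℕ) : (1 - p k) ^ v ≤ 1 :=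
    pow_le_one₀ (by linarith [hp1 k]) (by linarith [hp k])
  have hD0 (v k : ℕ) : 0 ≤ p k * (1 - p k) ^ v := mul_nonneg (hp k) (hq k v)
  have hN0 (v k : ℕ) : 0 ≤ p k ^ 2 * (1 - p k) ^ v := mul_nonneg (sq_nonneg _) (hq k v)
  have hND (v k : ℕ) : p k ^ 2 * (1 - p k) ^ v ≤ p k * (1 - p k) ^ v :=
    mul_le_mul_of_nonneg_right (by nlinarith [hp k, hp1 k]) (hq k v)
  have hDs (v : ℕ) : Summable fun k => p k * (1 - p k) ^ v :=
    hs.of_nonneg_of_le (hD0 v) fun k => mul_le_of_le_one_right (hp k) (hq1 k v)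
  have hNs (v : ℕ) : Summable fun k => p k ^ 2 * (1 - p k) ^ v :=
    (hDs v).of_nonneg_of_le (hN0 v) (hND v)
  rw [Metric.tendsto_atTop']
  intro ε hε
  obtain ⟨δ, hδ, hδ1, hδε⟩ : ∃ δ : ℝ, 0 < δ ∧ δ < 1 ∧ 2 * δ ≤ ε :=
    ⟨min (ε / 2) (1 / 2), by positivity, by linarith [min_le_right (ε / 2) (1 / 2 : ℝ)],
      by linarith [min_le_left (ε / 2) (1 / 2 : ℝ)]⟩
  obtain ⟨j, hj, hjδ⟩ : ∃ j, 0 < p j ∧ p j < δ := by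
    have hev : ∀ᶠ k in atTop, p k < δ := hs.tendsto_atTop_zero.eventually_lt_const hδ
    obtain ⟨j, h⟩ := ((Nat.frequently_atTop_iff_infinite.2 hinf).and_eventually hev).exists
    exact ⟨j, h⟩
  have hN (v : ℕ) : ∑' k, p k ^ 2 * (1 - p k) ^ v ≤
      δ * (∑' k, p k * (1 - p k) ^ v) + (1 - δ) ^ v := by
    have hδv : 0 ≤ (1 - δ) ^ v := pow_nonneg (by linarith) v
    calc ∑' k, p k ^ 2 * (1 - p k) ^ v
        ≤ ∑' k, (δ * (p k * (1 - p k) ^ v) + p k * (1 - δ) ^ v) := by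
          refine (hNs v).tsum_le_tsum (fun k => ?_) (((hDs v).mul_left δ).add (hs.mul_right _))
          rcases le_total (p k) δ with h | h
          · have h1 := mul_le_mul_of_nonneg_right h (hD0 v k)
            have h2 := mul_nonneg (hp k) hδv
            nlinarith
          · have h1 : (1 - p k) ^ v ≤ (1 - δ) ^ v :=
              pow_le_pow_left₀ (by linarith [hp1 k]) (by linarith) v
            have h2 := mul_le_mul_of_nonneg_left h1 (hp k)
            have h3 := mul_nonneg hδ.le (hD0 v k)
            linarith [hND v k]
      _ = δ * (∑' k, p k * (1 - p k) ^ v) + (1 - δ) ^ v := by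
          rw [((hDs v).mul_left δ).tsum_add (hs.mul_right _), tsum_mul_left, tsum_mul_right, hsum,
            one_mul]
  have hj1 : 0 < 1 - p j := by linarith
  have hr : Tendsto (fun v : ℕ => ((1 - δ) / (1 - p j)) ^ v) atTop (𝓝 0) :=
    tendsto_pow_atTop_nhds_zero_of_lt_one (div_nonneg (by linarith) hj1.le)
      ((div_lt_one hj1).2 (by linarith))
  obtain ⟨n, hn⟩ := eventually_atTop.1 (hr.eventually_lt_const (mul_pos hδ hj))
  refine ⟨n, fun v hv => ?_⟩
  have hDj : p j * (1 - p j) ^ v ≤ ∑' k, p k * (1 - p k) ^ v :=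
    (hDs v).le_tsum j fun i _ => hD0 v i
  have hDpos : 0 < ∑' k, p k * (1 - p k) ^ v := (mul_pos hj (pow_pos hj1 v)).trans_le hDj
  have hsmall : (1 - δ) ^ v < δ * p j * (1 - p j) ^ v := by
    have h := hn v hv.le
    rwa [div_pow, div_lt_iff₀ (pow_pos hj1 v)] at h
  rw [Real.dist_eq, sub_zero, abs_of_nonneg (div_nonneg (tsum_nonneg (hN0 v)) hDpos.le),
    div_lt_iff₀ hDpos]
  have h1 := mul_le_mul_of_nonneg_left hDj hδ.le
  have h2 := mul_le_mul_of_nonneg_right hδε hDpos.le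
  linarith [hN v]
end

section
/- Suppose p_k > 0 for all k ≥ 1 and p_{k+1}/p_k → 1 as k → ∞. Then the tail index τ_v = v ζ_v tends to infinity as v → ∞. -/
/-!
The summand `v * p k * (1 - p k) ^ v` is bounded below by a constant as soon as `v * p k` lies in
a fixed compact subinterval of `(0, 1)`, by Bernoulli's inequality. Let `K` be the first index with
`4 * v * p K ≤ 1`. It tends to infinity with `v`, because every `p k` is positive. Since the ratio
of terms of `p` at a fixed distance tends to `1`, both `p (K - 1) / p K` and, for any fixed `m`,
the ratios `p (K + j) / p K` with `j < m` lie in `[1/2, 2]` once `v` is large. Hence `v * p (K + j)`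
lies in `[1/16, 1/2]` and each of these `m` summands is at least `1/32`. As `m` is arbitrary,
`tailIdx p v` exceeds every bound.
-/

open Filter Topology

/-- For a positive integer `v`, `ζ_v = Σ_k p_k (1 - p_k)^v`. -/
noncomputable def zetaIdx (p : ℕ → ℝ) (v : ℕ) : ℝ := ∑' k, p k * (1 - p k) ^ v

/-- The tail index `τ_v = v ζ_v`. -/
noncomputable def tailIdx (p : ℕ → ℝ) (v : ℕ) : ℝ := (v : ℝ) * zetaIdx p v

lemma tendsto_ratio_add (p : ℕ → ℝ) (hp : ∀ k, 0 < p k)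
    (hratio : Tendsto (fun k => p (k + 1) / p k) atTop (𝓝 1)) (j : ℕ) :
    Tendsto (fun k => p (k + j) / p k) atTop (𝓝 1) := by
  induction j with
  | zero =>
    refine tendsto_const_nhds.congr fun k => ?_
    simp [(hp k).ne']
  | succ j ih =>
    have h := (hratio.comp (tendsto_add_atTop_nat j)).mul ih
    rw [one_mul] at h
    refine h.congr fun k => ?_
    have h1 := (hp k).ne'
    have h2 := (hp (k + j)).ne'
    simp only [Function.comp, ← add_assoc]
    field_simp

lemma eventually_comparable (p : ℕ → ℝ) (hp : ∀ k, 0 < p k)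
    (hratio : Tendsto (fun k => p (k + 1) / p k) atTop (𝓝 1)) (m : ℕ) :
    ∀ᶠ k in atTop, ∀ j ∈ Finset.range m, p k ≤ 2 * p (k + j) ∧ p (k + j) ≤ 2 * p k := by
  rw [Filter.eventually_all_finset]
  intro j _
  have h := tendsto_ratio_add p hp hratio j
  filter_upwards [h.eventually (lt_mem_nhds (show (1 / 2 : ℝ) < 1 by norm_num)),
    h.eventually (gt_mem_nhds (show (1 : ℝ) < 2 by norm_num))] with k h1 h2
  rw [lt_div_iff₀ (hp k)] at h1
  rw [div_lt_iff₀ (hp k)] at h2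
  constructor <;> linarith

lemma summand_lower_bound (x : ℝ) (v : ℕ) (hx1 : x ≤ 1) (h1 : 1 ≤ 16 * (v * x))
    (h2 : 2 * (v * x) ≤ 1) : 1 / 32 ≤ v * (x * (1 - x) ^ v) := by
  have hb := one_add_mul_le_pow (show (-2 : ℝ) ≤ -x by linarith) v
  rw [← sub_eq_add_neg] at hb
  have hb' : 1 / 2 ≤ (1 - x) ^ v := by linarith
  rw [← mul_assoc]
  nlinarith

/-- If `p k > 0` for all `k` and `p (k+1) / p k → 1`, then the tail
index `τ_v = v ζ_v` tends to infinity as `v → ∞`. -/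
theorem tailIndex_tendsto_atTop (p : ℕ → ℝ) (hp : ∀ k, 0 < p k) (hsum : ∑' k, p k = 1)
    (hratio : Tendsto (fun k => p (k + 1) / p k) atTop (𝓝 1)) :
    Tendsto (fun v : ℕ => tailIdx p v) atTop atTop := by
  have hs : Summable p := by
    by_contra h
    rw [tsum_eq_zero_of_not_summable h] at hsum
    exact zero_ne_one hsum
  have hp1 : ∀ k, p k ≤ 1 := fun k => hsum ▸ hs.le_tsum k fun j _ => (hp j).le
  have hterm : ∀ v k, 0 ≤ p k * (1 - p k) ^ v := fun v k =>
    mul_nonneg (hp k).le (pow_nonneg (by linarith [hp1 k]) _)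
  have hsv : ∀ v, Summable fun k => p k * (1 - p k) ^ v := fun v =>
    Summable.of_nonneg_of_le (hterm v)
      (fun k => mul_le_of_le_one_right (hp k).le
        (pow_le_one₀ (by linarith [hp1 k]) (by linarith [hp k]))) hs
  rw [tendsto_atTop]
  intro B
  obtain ⟨m, hm⟩ := exists_nat_ge (32 * B)
  obtain ⟨N, hN⟩ := eventually_atTop.1
    ((eventually_comparable p hp hratio m).and (eventually_comparable p hp hratio 2))
  -- No index up to `N` satisfies `4 * v * p k ≤ 1` once `v` is large.
  have hlarge : ∀ᶠ v : ℕ in atTop, ∀ k ∈ Finset.range (N + 1), 1 < 4 * (v * p k) := by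
    rw [Filter.eventually_all_finset]
    intro k _
    have h : Tendsto (fun v : ℕ => 4 * ((v : ℝ) * p k)) atTop atTop :=
      (tendsto_natCast_atTop_atTop.atTop_mul_const (hp k)).const_mul_atTop (by norm_num)
    exact h.eventually_gt_atTop 1
  filter_upwards [hlarge] with v hv
  have hex : ∃ k, 4 * (v * p k) ≤ 1 := by
    have h : Tendsto (fun k => 4 * ((v : ℝ) * p k)) atTop (𝓝 0) := by
      simpa using (hs.tendsto_atTop_zero.const_mul (v : ℝ)).const_mul 4
    exact (h.eventually (ge_mem_nhds one_pos)).exists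
  classical
  obtain ⟨K, hK, hmin⟩ : ∃ K, 4 * (v * p K) ≤ 1 ∧ ∀ k < K, 1 < 4 * (v * p k) :=
    ⟨Nat.find hex, Nat.find_spec hex, fun k hk => not_le.1 (Nat.find_min hex hk)⟩
  have hKN : N < K := by
    by_contra! h
    exact absurd hK (not_le.2 (hv K (Finset.mem_range.2 (by omega))))
  obtain ⟨L, rfl⟩ : ∃ L, K = L + 1 := ⟨K - 1, by omega⟩
  have hL := hmin L (by omega)
  have hLK := ((hN L (by omega)).2 1 (by simp)).1
  have hv0 : (0 : ℝ) ≤ v := v.cast_nonneg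
  have hLK' := mul_le_mul_of_nonneg_left hLK hv0
  have key : ∀ k ∈ Finset.Ico (L + 1) (L + 1 + m), 1 / 32 ≤ v * (p k * (1 - p k) ^ v) := by
    intro k hk
    rw [Finset.mem_Ico] at hk
    obtain ⟨j, rfl⟩ := Nat.exists_eq_add_of_le hk.1
    obtain ⟨h1, h2⟩ := (hN (L + 1) (by omega)).1 j (Finset.mem_range.2 (by omega))
    have h1' := mul_le_mul_of_nonneg_left h1 hv0
    have h2' := mul_le_mul_of_nonneg_left h2 hv0
    exact summand_lower_bound _ v (hp1 _) (by linarith) (by linarith)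
  have hcard := Finset.card_nsmul_le_sum _ _ _ key
  rw [Nat.card_Ico, Nat.add_sub_cancel_left, nsmul_eq_mul, ← Finset.mul_sum] at hcard
  have htsum := (hsv v).sum_le_tsum (Finset.Ico (L + 1) (L + 1 + m)) fun k _ => hterm v k
  calc B ≤ m * (1 / 32) := by linarith
    _ ≤ _ := hcard
    _ ≤ tailIdx p v := mul_le_mul_of_nonneg_left htsum hv0
end

section
/- Suppose there exist constants c > 0, λ > 1, and an integer k_0 ≥ 1 such that p_k = c·k^{−λ} for all k ≥ k_0 (power tail). Then τ_v ≍ v^{1/λ}: there exist constants 0 < c_1 ≤ c_2 and an integer V such that c_1 · v^{1/λ} ≤ τ_v ≤ c_2 · v^{1/λ} for all v ≥ V. -/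
/-!
Write `x = v^{1/λ}`, so that `v = x^λ`; the transition in `v p_k (1 - p_k)^v` takes place at `k ≈ x`.

* Upper bound. Each term `v p_k (1 - p_k)^v` is at most `v p_k e^{-v p_k} ≤ 1`, so the indices
  `k ≤ ⌈x⌉` contribute `O(x)`. For `k > ⌈x⌉` the term is at most `v p_k = c v k^{-λ}`, and
  telescoping (`rpow_neg_le_telescope`) gives `∑_{k > ⌈x⌉} k^{-λ} ≤ x^{1-λ} / (λ - 1)`, which
  contributes at most `c x / (λ - 1)`.
* Lower bound. With `A = 1 + 2c` and `L = ⌈A x⌉`, every `k ∈ [L, 2L)` has `v p_k ≤ 1/2`, so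
  `(1 - p_k)^v ≥ 1/2` by Bernoulli, while `v p_k` is bounded below by a positive constant. There
  are `L ≥ A x` such indices.
-/

open Filter Topology

/-- Every single term of `τ_v` is at most `1`, because `t e^{-t} ≤ 1` at `t = v q`. -/
lemma mul_one_sub_pow_le_one (q : ℝ) (hq0 : 0 ≤ q) (hq1 : q ≤ 1) (v : ℕ) :
    (v : ℝ) * (q * (1 - q) ^ v) ≤ 1 := by
  have h1 : (1 - q) ^ v ≤ Real.exp (-(v * q)) := by
    calc (1 - q) ^ v ≤ (Real.exp (-q)) ^ v := by
          apply pow_le_pow_left₀ (by linarith)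
          linarith [Real.add_one_le_exp (-q)]
      _ = Real.exp (-(v * q)) := by rw [← Real.exp_nat_mul]; ring_nf
  have hvq : 0 ≤ (v : ℝ) * q := by positivity
  calc (v : ℝ) * (q * (1 - q) ^ v) = (v * q) * (1 - q) ^ v := by ring
    _ ≤ Real.exp (v * q) * Real.exp (-(v * q)) := by
        apply mul_le_mul _ h1 (pow_nonneg (by linarith) _) (Real.exp_pos _).le
        linarith [Real.add_one_le_exp ((v : ℝ) * q)]
    _ = 1 := by rw [← Real.exp_add]; simp

/-- The discrete form of `(λ - 1) t^{-λ} = -(t^{1-λ})'`, used to sum the power tail. -/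
lemma rpow_neg_le_telescope (a lam : ℝ) (ha : 0 < a) (hlam : 1 < lam) :
    (lam - 1) * (a + 1) ^ (-lam) ≤ a ^ (1 - lam) - (a + 1) ^ (1 - lam) := by
  have hb : 0 < a + 1 := by linarith
  have hlog : Real.log (a / (a + 1)) ≤ -(1 / (a + 1)) := by
    have := Real.log_le_sub_one_of_pos (div_pos ha hb)
    have h2 : a / (a + 1) - 1 = -(1 / (a + 1)) := by field_simp; ring
    linarith
  have h1 : 1 + (lam - 1) * (1 / (a + 1)) ≤ (a / (a + 1)) ^ (1 - lam) := by
    rw [Real.rpow_def_of_pos (div_pos ha hb)]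
    have := Real.add_one_le_exp (Real.log (a / (a + 1)) * (1 - lam))
    nlinarith
  have h2 : a ^ (1 - lam) = (a / (a + 1)) ^ (1 - lam) * (a + 1) ^ (1 - lam) := by
    rw [← Real.mul_rpow (by positivity) hb.le]
    congr 1
    field_simp
  have h3 : (a + 1) ^ (-lam) = (1 / (a + 1)) * (a + 1) ^ (1 - lam) := by
    rw [show -lam = -1 + (1 - lam) by ring, Real.rpow_add hb, Real.rpow_neg_one, one_div]
  have h4 : 0 < (a + 1) ^ (1 - lam) := Real.rpow_pos_of_pos hb _
  rw [h2, h3]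
  nlinarith [mul_le_mul_of_nonneg_right h1 h4.le]

lemma tailIdx_upper (p : ℕ → ℝ) (hp : ∀ k, 0 ≤ p k) (hp1 : ∀ k, p k ≤ 1) (hs : Summable p)
    (c lam : ℝ) (hc : 0 < c) (hlam : 1 < lam) (k₀ : ℕ)
    (hpow : ∀ k, k₀ ≤ k → p k = c * (k : ℝ) ^ (-lam))
    (v : ℕ) (x : ℝ) (hx1 : 1 ≤ x) (hxk : (k₀ : ℝ) ≤ x) (hxv : x ^ lam = v) :
    tailIdx p v ≤ (3 + c / (lam - 1)) * x := by
  have hx0 : 0 < x := by linarith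
  have hl : 0 < lam - 1 := by linarith
  have hpw : ∀ k, p k * (1 - p k) ^ v ≤ p k := fun k =>
    mul_le_of_le_one_right (hp k) (pow_le_one₀ (by linarith [hp1 k]) (by linarith [hp k]))
  have hnn : ∀ k, 0 ≤ p k * (1 - p k) ^ v := fun k =>
    mul_nonneg (hp k) (pow_nonneg (by linarith [hp1 k]) _)
  have hf : Summable (fun k => (v : ℝ) * (p k * (1 - p k) ^ v)) :=
    (Summable.of_nonneg_of_le hnn hpw hs).mul_left _
  set n := ⌈x⌉₊ with hn
  have hnx : x ≤ n := Nat.le_ceil x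
  have hnx' : (n : ℝ) < x + 1 := Nat.ceil_lt_add_one hx0.le
  have hkn : k₀ ≤ n := by exact_mod_cast hxk.trans hnx
  have hn0 : (0 : ℝ) < n := by linarith
  have hA : ∑ k ∈ Finset.range (n + 1), (v : ℝ) * (p k * (1 - p k) ^ v) ≤ 3 * x := by
    calc _ ≤ ∑ k ∈ Finset.range (n + 1), (1 : ℝ) :=
          Finset.sum_le_sum fun k _ => mul_one_sub_pow_le_one _ (hp k) (hp1 k) v
      _ ≤ 3 * x := by simp; linarith
  have hB : ∑' k, (v : ℝ) * (p (k + (n + 1)) * (1 - p (k + (n + 1))) ^ v)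
      ≤ c / (lam - 1) * x := by
    apply Real.tsum_le_of_sum_range_le (fun k => mul_nonneg v.cast_nonneg (hnn _))
    intro m
    calc ∑ k ∈ Finset.range m, (v : ℝ) * (p (k + (n + 1)) * (1 - p (k + (n + 1))) ^ v)
        ≤ ∑ k ∈ Finset.range m, (v * c / (lam - 1)) *
            (((n + k : ℕ) : ℝ) ^ (1 - lam) - ((n + (k + 1) : ℕ) : ℝ) ^ (1 - lam)) := by
          apply Finset.sum_le_sum
          intro k _
          have ht := rpow_neg_le_telescope ((n + k : ℕ) : ℝ) lam (by push_cast; positivity) hlam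
          have h1 := hpw (k + (n + 1))
          have e : ((k + (n + 1) : ℕ) : ℝ) = ((n + k : ℕ) : ℝ) + 1 := by push_cast; ring
          have e' : ((n + (k + 1) : ℕ) : ℝ) = ((n + k : ℕ) : ℝ) + 1 := by push_cast; ring
          rw [e']
          calc _ ≤ (v : ℝ) * p (k + (n + 1)) := by gcongr
            _ = (v * c / (lam - 1)) * ((lam - 1) * (((n + k : ℕ) : ℝ) + 1) ^ (-lam)) := by
                rw [hpow _ (by omega), e]; field_simp
            _ ≤ _ := by gcongr
      _ = (v * c / (lam - 1)) * ((n : ℝ) ^ (1 - lam) - ((n + m : ℕ) : ℝ) ^ (1 - lam)) := by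
          rw [← Finset.mul_sum,
            Finset.sum_range_sub' (fun k => ((n + k : ℕ) : ℝ) ^ (1 - lam))]
          simp
      _ ≤ (v * c / (lam - 1)) * x ^ (1 - lam) := by
          gcongr
          have h1 : (n : ℝ) ^ (1 - lam) ≤ x ^ (1 - lam) :=
            Real.rpow_le_rpow_of_nonpos hx0 hnx (by linarith)
          have h2 : 0 ≤ ((n + m : ℕ) : ℝ) ^ (1 - lam) := by positivity
          linarith
      _ = c / (lam - 1) * (x ^ lam * x ^ (1 - lam)) := by rw [hxv]; ring
      _ = c / (lam - 1) * x := by rw [← Real.rpow_add hx0]; simp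
  have := hf.sum_add_tsum_nat_add (n + 1)
  rw [tailIdx, zetaIdx, ← tsum_mul_left, ← this]
  linarith

lemma tailIdx_lower (p : ℕ → ℝ) (hp : ∀ k, 0 ≤ p k) (hp1 : ∀ k, p k ≤ 1) (hs : Summable p)
    (c lam : ℝ) (hc : 0 < c) (hlam : 1 < lam) (k₀ : ℕ)
    (hpow : ∀ k, k₀ ≤ k → p k = c * (k : ℝ) ^ (-lam))
    (v : ℕ) (x : ℝ) (hx1 : 1 ≤ x) (hxk : (k₀ : ℝ) ≤ x) (hxv : x ^ lam = v) :
    (1 + 2 * c) * (c * (4 * (1 + 2 * c)) ^ (-lam) / 2) * x ≤ tailIdx p v := by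
  have hx0 : 0 < x := by linarith
  have hpw : ∀ k, p k * (1 - p k) ^ v ≤ p k := fun k =>
    mul_le_of_le_one_right (hp k) (pow_le_one₀ (by linarith [hp1 k]) (by linarith [hp k]))
  have hnn : ∀ k, 0 ≤ p k * (1 - p k) ^ v := fun k =>
    mul_nonneg (hp k) (pow_nonneg (by linarith [hp1 k]) _)
  have hf : Summable (fun k => (v : ℝ) * (p k * (1 - p k) ^ v)) :=
    (Summable.of_nonneg_of_le hnn hpw hs).mul_left _
  set A := 1 + 2 * c with hA
  have hA1 : 1 ≤ A := by linarith
  have hA0 : 0 < A := by linarith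
  set L := ⌈A * x⌉₊ with hL
  have hAx : x ≤ A * x := le_mul_of_one_le_left hx0.le hA1
  have hLx : A * x ≤ L := Nat.le_ceil _
  have hLx' : (L : ℝ) < A * x + 1 := Nat.ceil_lt_add_one (by positivity)
  have hkL : k₀ ≤ L := by exact_mod_cast hxk.trans (hAx.trans hLx)
  have hv : x ^ lam * x ^ (-lam) = 1 := by rw [← Real.rpow_add hx0]; simp
  have key : ∀ k ∈ Finset.Ico L (2 * L),
      c * (4 * A) ^ (-lam) / 2 ≤ (v : ℝ) * (p k * (1 - p k) ^ v) := by
    intro k hk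
    rw [Finset.mem_Ico] at hk
    have hk1 : A * x ≤ k := hLx.trans (by exact_mod_cast hk.1)
    have hk2 : (k : ℝ) ≤ 4 * A * x := by
      have : (k : ℝ) ≤ 2 * L := by exact_mod_cast hk.2.le
      linarith
    have hk0 : (0 : ℝ) < k := by linarith
    have hpk := hpow k (hkL.trans hk.1)
    -- `A^λ ≥ A ≥ 2c` is what makes `v p_k ≤ 1/2`.
    have hup : (v : ℝ) * p k ≤ 1 / 2 := by
      have h1 : (k : ℝ) ^ (-lam) ≤ A ^ (-lam) * x ^ (-lam) := by
        rw [← Real.mul_rpow hA0.le hx0.le]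
        exact Real.rpow_le_rpow_of_nonpos (by positivity) hk1 (by linarith)
      have h2 : A ^ (-lam) ≤ A⁻¹ := by
        rw [← Real.rpow_neg_one]
        exact Real.rpow_le_rpow_of_exponent_le hA1 (by linarith)
      have h3 : c * A⁻¹ ≤ 1 / 2 := by
        rw [← div_eq_mul_inv, div_le_iff₀ hA0]; linarith
      calc (v : ℝ) * p k ≤ x ^ lam * (c * (A ^ (-lam) * x ^ (-lam))) := by
            rw [hpk, ← hxv]; gcongr
        _ = c * A ^ (-lam) * (x ^ lam * x ^ (-lam)) := by ring
        _ = c * A ^ (-lam) := by rw [hv, mul_one]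
        _ ≤ c * A⁻¹ := by gcongr
        _ ≤ 1 / 2 := h3
    have hlow : c * (4 * A) ^ (-lam) ≤ (v : ℝ) * p k := by
      have h1 : (4 * A) ^ (-lam) * x ^ (-lam) ≤ (k : ℝ) ^ (-lam) := by
        rw [← Real.mul_rpow (by positivity) hx0.le]
        exact Real.rpow_le_rpow_of_nonpos hk0 hk2 (by linarith)
      calc c * (4 * A) ^ (-lam) = x ^ lam * (c * ((4 * A) ^ (-lam) * x ^ (-lam))) := by
            linear_combination (-(c * (4 * A) ^ (-lam))) * hv
        _ ≤ (v : ℝ) * p k := by rw [hpk, ← hxv]; gcongr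
    have hbern : 1 / 2 ≤ (1 - p k) ^ v := by
      have := one_add_mul_le_pow (a := -p k) (by linarith [hp1 k]) v
      rw [← sub_eq_add_neg] at this
      linarith
    calc c * (4 * A) ^ (-lam) / 2 = (c * (4 * A) ^ (-lam)) * (1 / 2) := by ring
      _ ≤ ((v : ℝ) * p k) * (1 - p k) ^ v := by
          apply mul_le_mul hlow hbern (by norm_num) (mul_nonneg v.cast_nonneg (hp k))
      _ = _ := by ring
  rw [tailIdx, zetaIdx, ← tsum_mul_left]
  calc A * (c * (4 * A) ^ (-lam) / 2) * x = (A * x) * (c * (4 * A) ^ (-lam) / 2) := by ring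
    _ ≤ L * (c * (4 * A) ^ (-lam) / 2) := by gcongr
    _ = (Finset.Ico L (2 * L)).card • (c * (4 * A) ^ (-lam) / 2) := by
        rw [Nat.card_Ico, nsmul_eq_mul, show 2 * L - L = L by omega]
    _ ≤ ∑ k ∈ Finset.Ico L (2 * L), (v : ℝ) * (p k * (1 - p k) ^ v) :=
        Finset.card_nsmul_le_sum _ _ _ key
    _ ≤ _ := hf.sum_le_tsum _ fun k _ => mul_nonneg v.cast_nonneg (hnn k)

/-- If `p_k = c k^{-λ}` for all `k ≥ k₀` (power tail, `λ > 1`), then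
`τ_v ≍ v^{1/λ}`: there are constants `0 < c₁ ≤ c₂` and an integer `V` with
`c₁ v^{1/λ} ≤ τ_v ≤ c₂ v^{1/λ}` for all `v ≥ V`. -/
theorem tailIdx_powerTail
    (p : ℕ → ℝ) (hp : ∀ k, 0 ≤ p k) (hsum : ∑' k, p k = 1)
    (c lam : ℝ) (hc : 0 < c) (hlam : 1 < lam)
    (k₀ : ℕ) (hk₀ : 1 ≤ k₀)
    (hpow : ∀ k, k₀ ≤ k → p k = c * (k : ℝ) ^ (-lam)) :
    ∃ c₁ c₂ : ℝ, ∃ V : ℕ, 0 < c₁ ∧ c₁ ≤ c₂ ∧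
      ∀ v : ℕ, V ≤ v →
        c₁ * (v : ℝ) ^ (1 / lam) ≤ tailIdx p v ∧
        tailIdx p v ≤ c₂ * (v : ℝ) ^ (1 / lam) := by
  -- A non-summable family would have the junk sum `0`.
  have hs : Summable p := by
    by_contra h
    rw [tsum_eq_zero_of_not_summable h] at hsum
    norm_num at hsum
  have hp1 : ∀ k, p k ≤ 1 := fun k => hsum ▸ hs.le_tsum k (fun j _ => hp j)
  have hlam0 : 0 < lam := by linarith
  set C₁ := (1 + 2 * c) * (c * (4 * (1 + 2 * c)) ^ (-lam) / 2) with hC₁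
  refine ⟨C₁, max C₁ (3 + c / (lam - 1)), ⌈(k₀ : ℝ) ^ lam⌉₊, by positivity,
    le_max_left _ _, fun v hv => ?_⟩
  have hv' : (k₀ : ℝ) ^ lam ≤ v := (Nat.le_ceil _).trans (by exact_mod_cast hv)
  have hxv : ((v : ℝ) ^ (1 / lam)) ^ lam = v := by
    rw [one_div, Real.rpow_inv_rpow v.cast_nonneg hlam0.ne']
  have hxk : (k₀ : ℝ) ≤ (v : ℝ) ^ (1 / lam) := by
    rw [one_div]
    exact (Real.le_rpow_inv_iff_of_pos k₀.cast_nonneg v.cast_nonneg hlam0).2 hv'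
  have hx1 : (1 : ℝ) ≤ (v : ℝ) ^ (1 / lam) := le_trans (by exact_mod_cast hk₀) hxk
  refine ⟨tailIdx_lower p hp hp1 hs c lam hc hlam k₀ hpow v _ hx1 hxk hxv,
    (tailIdx_upper p hp hp1 hs c lam hc hlam k₀ hpow v _ hx1 hxk hxv).trans ?_⟩
  gcongr
  exact le_max_right _ _
end

section
/- Suppose there exist constants c > 0, λ > 0, α ∈ (0,1), and an integer k_0 ≥ 1 such that p_k = c·exp(−λ k^α) for all k ≥ k_0 (sub-exponential tail). Then τ_v ≍ (ln v)^{1/α − 1}: there exist constants 0 < c_1 ≤ c_2 and an integer V such that c_1 · (ln v)^{1/α − 1} ≤ τ_v ≤ c_2 · (ln v)^{1/α − 1} for all v ≥ V. -/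
open Filter Topology

/-! ### Real inequalities and summability of the weights -/

lemma rpow_succ_sub_le {α : ℝ} (hα : 0 < α) (hα1 : α < 1) {x : ℝ} (hx : 0 < x) :
    (x + 1) ^ α - x ^ α ≤ x ^ (α - 1) := by
  have h1 : (1 + 1 / x) ^ α ≤ 1 + α * (1 / x) :=
    rpow_one_add_le_one_add_mul_self (by have : 0 < 1 / x := by positivity
                                         linarith) hα.le hα1.le
  have h2 : (x + 1) ^ α = x ^ α * (1 + 1 / x) ^ α := by
    rw [← Real.mul_rpow hx.le (by positivity)]
    congr 1
    field_simp
  have h3 : x ^ (α - 1) = x ^ α * (1 / x) := by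
    rw [Real.rpow_sub_one hx.ne']; ring
  have h4 : 0 < x ^ α := by positivity
  rw [h2, h3]
  have h5 : α * (1 / x) ≤ 1 / x := mul_le_of_le_one_left (by positivity) hα1.le
  nlinarith

lemma le_rpow_succ_sub {α : ℝ} (hα : 0 < α) (hα1 : α < 1) {x : ℝ} (hx : 0 ≤ x) :
    α * (x + 1) ^ (α - 1) ≤ (x + 1) ^ α - x ^ α := by
  have hx1 : 0 < x + 1 := by linarith
  have h0 : 1 / (x + 1) ≤ 1 := by rw [div_le_one hx1]; linarith
  have h1 : (1 + -(1 / (x + 1))) ^ α ≤ 1 + α * -(1 / (x + 1)) :=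
    rpow_one_add_le_one_add_mul_self (by linarith) hα.le hα1.le
  have h2 : x ^ α = (x + 1) ^ α * (1 + -(1 / (x + 1))) ^ α := by
    rw [← Real.mul_rpow hx1.le (by linarith)]
    congr 1
    field_simp
    ring
  have h3 : (x + 1) ^ (α - 1) = (x + 1) ^ α * (1 / (x + 1)) := by
    rw [Real.rpow_sub_one hx1.ne']; ring
  have h4 : 0 < (x + 1) ^ α := by positivity
  rw [h2, h3]
  nlinarith

lemma add_one_rpow_le {α : ℝ} (hα : 0 < α) (hα1 : α < 1) {x : ℝ} (hx : 0 ≤ x) :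
    (x + 1) ^ α ≤ x ^ α + 1 := by
  simpa using Real.rpow_add_le_add_rpow hx zero_le_one hα.le hα1.le

lemma summable_exp_neg_rpow {α a : ℝ} (hα : 0 < α) (ha : 0 < a) :
    Summable fun k : ℕ => Real.exp (-a * (k : ℝ) ^ α) := by
  have h1 := isLittleO_exp_neg_mul_rpow_atTop ha (-2 / α)
  have h2 : Tendsto (fun k : ℕ => (k : ℝ) ^ α) atTop atTop :=
    (tendsto_rpow_atTop hα).comp tendsto_natCast_atTop_atTop
  have h3 := (h1.comp_tendsto h2).isBigO
  have h4 : Summable fun k : ℕ => (k : ℝ) ^ (-2 : ℝ) := Real.summable_nat_rpow.2 (by norm_num)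
  refine summable_of_isBigO_nat h4 (h3.congr (fun _ => rfl) fun k => ?_)
  simp only [Function.comp]
  rw [← Real.rpow_mul (Nat.cast_nonneg k)]
  congr 1
  field_simp

lemma one_sub_pow_le_exp {x : ℝ} (hx : x ≤ 1) (v : ℕ) :
    (1 - x) ^ v ≤ Real.exp (-(v * x)) := by
  have h : 1 - x ≤ Real.exp (-x) := Real.one_sub_le_exp_neg x
  calc (1 - x) ^ v ≤ Real.exp (-x) ^ v := pow_le_pow_left₀ (by linarith) h v
    _ = _ := by rw [← Real.exp_nat_mul]; ring_nf

lemma mul_exp_neg_le_one (y : ℝ) : y * Real.exp (-y) ≤ 1 := by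
  rw [Real.exp_neg, ← div_eq_mul_inv, div_le_one (Real.exp_pos y)]
  linarith [Real.add_one_le_exp y]

/-! ### Telescoping estimates for the weights -/

/-- The pure sub-exponential weights `c exp(-λ k^α)`, for all `k` including those below `k₀`. -/
noncomputable def subexpWeight (c lam α : ℝ) (k : ℕ) : ℝ := c * Real.exp (-lam * (k : ℝ) ^ α)

lemma subexpWeight_succ (c lam α : ℝ) (k : ℕ) :
    subexpWeight c lam α (k + 1) =
      subexpWeight c lam α k * Real.exp (-(lam * (((k : ℝ) + 1) ^ α - (k : ℝ) ^ α))) := by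
  unfold subexpWeight
  rw [mul_assoc, ← Real.exp_add]
  push_cast
  ring_nf

/-- The weight is controlled from below by its own decrement, which makes tail sums telescope. -/
lemma decrement_le {c lam α : ℝ} (hc : 0 < c) (hlam : 0 < lam) (hα : 0 < α) (hα1 : α < 1)
    {K k : ℕ} (hK : 1 ≤ K) (hk : K ≤ k) :
    (K : ℝ) ^ (1 - α) * (subexpWeight c lam α k - subexpWeight c lam α (k + 1))
      ≤ lam * subexpWeight c lam α k := by
  have hK0 : (0 : ℝ) < K := by exact_mod_cast hK
  have hkK : (K : ℝ) ≤ k := by exact_mod_cast hk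
  have hk0 : (0 : ℝ) < k := by linarith
  have hq : 0 < subexpWeight c lam α k := by unfold subexpWeight; positivity
  have h1 := rpow_succ_sub_le hα hα1 hk0
  have h2 : (K : ℝ) ^ (1 - α) * (k : ℝ) ^ (α - 1) ≤ 1 := by
    calc (K : ℝ) ^ (1 - α) * (k : ℝ) ^ (α - 1) ≤ (k : ℝ) ^ (1 - α) * (k : ℝ) ^ (α - 1) := by
          gcongr
      _ = 1 := by rw [← Real.rpow_add hk0]; simp
  have h3 : (0 : ℝ) ≤ (K : ℝ) ^ (1 - α) := by positivity
  set d := ((k : ℝ) + 1) ^ α - (k : ℝ) ^ α with hd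
  have h4 : subexpWeight c lam α k - subexpWeight c lam α (k + 1)
      ≤ subexpWeight c lam α k * (lam * d) := by
    rw [subexpWeight_succ]
    have := Real.one_sub_le_exp_neg (lam * d)
    nlinarith
  have h5 : (K : ℝ) ^ (1 - α) * d ≤ 1 := (mul_le_mul_of_nonneg_left h1 h3).trans h2
  calc _ ≤ (K : ℝ) ^ (1 - α) * (subexpWeight c lam α k * (lam * d)) :=
        mul_le_mul_of_nonneg_left h4 h3
    _ = (lam * subexpWeight c lam α k) * ((K : ℝ) ^ (1 - α) * d) := by ring
    _ ≤ (lam * subexpWeight c lam α k) * 1 := by gcongr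
    _ = _ := mul_one _

lemma tail_sum_ge {c lam α : ℝ} (hc : 0 < c) (hlam : 0 < lam) (hα : 0 < α) (hα1 : α < 1)
    {K : ℕ} (hK : 1 ≤ K) :
    (K : ℝ) ^ (1 - α) * subexpWeight c lam α K
      ≤ lam * ∑' n, subexpWeight c lam α (K + n) := by
  have hs : Summable (subexpWeight c lam α) := (summable_exp_neg_rpow hα hlam).mul_left c
  have hs' : Summable fun n => subexpWeight c lam α (K + n) := by
    simpa [add_comm] using (summable_nat_add_iff K).2 hs
  have hnn : ∀ k, 0 ≤ subexpWeight c lam α k := fun k => by unfold subexpWeight; positivity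
  have h1 : ∀ N : ℕ, (K : ℝ) ^ (1 - α) * (subexpWeight c lam α K - subexpWeight c lam α (K + N))
      ≤ lam * ∑' n, subexpWeight c lam α (K + n) := by
    intro N
    have := Finset.sum_range_sub' (fun n => subexpWeight c lam α (K + n)) N
    simp only [add_zero] at this
    rw [← this, Finset.mul_sum]
    refine (Finset.sum_le_sum fun n _ =>
      decrement_le hc hlam hα hα1 hK (Nat.le_add_right K n)).trans ?_
    rw [← Finset.mul_sum]
    exact mul_le_mul_of_nonneg_left (hs'.sum_le_tsum _ fun n _ => hnn _) hlam.le
  have h2 : Tendsto (fun N : ℕ => (K : ℝ) ^ (1 - α) *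
      (subexpWeight c lam α K - subexpWeight c lam α (K + N))) atTop
      (𝓝 ((K : ℝ) ^ (1 - α) * (subexpWeight c lam α K - 0))) :=
    (tendsto_const_nhds.sub hs'.tendsto_atTop_zero).const_mul _
  rw [sub_zero] at h2
  exact le_of_tendsto' h2 h1

/-- With `y = v q k`, the term `y e^{-y}` is controlled by the increment of `e^{-v q}`. -/
lemma term_le_increment {c lam α : ℝ} (hc : 0 < c) (hlam : 0 < lam) (hα : 0 < α) (hα1 : α < 1)
    (v k : ℕ) :
    v * subexpWeight c lam α k * Real.exp (-(v * subexpWeight c lam α k)) ≤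
      (1 + lam) / (lam * α) * ((k : ℝ) + 1) ^ (1 - α) *
        (Real.exp (-(v * subexpWeight c lam α (k + 1)))
          - Real.exp (-(v * subexpWeight c lam α k))) := by
  have hk0 : (0 : ℝ) ≤ k := Nat.cast_nonneg k
  have hk1 : (0 : ℝ) < (k : ℝ) + 1 := by linarith
  have hd1 := le_rpow_succ_sub hα hα1 hk0
  have hd2 := add_one_rpow_le hα hα1 hk0
  have hq : 0 < subexpWeight c lam α k := by unfold subexpWeight; positivity
  rw [subexpWeight_succ]
  set d := ((k : ℝ) + 1) ^ α - (k : ℝ) ^ α with hd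
  have hd0 : 0 ≤ d := le_trans (by positivity) hd1
  have hd1' : d ≤ 1 := by linarith
  set y := (v : ℝ) * subexpWeight c lam α k with hy
  have hy0 : 0 ≤ y := by positivity
  -- `1 - e^{-t} ≥ t / (1 + t)`, with `t = λ d ≤ λ`
  have h1 : lam * d / (1 + lam) ≤ 1 - Real.exp (-(lam * d)) := by
    have ht : 0 ≤ lam * d := by positivity
    have ht' : lam * d ≤ lam := mul_le_of_le_one_right hlam.le hd1'
    have e1 : Real.exp (-(lam * d)) ≤ 1 / (1 + lam * d) := by
      rw [Real.exp_neg, ← one_div]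
      apply one_div_le_one_div_of_le (by positivity)
      linarith [Real.add_one_le_exp (lam * d)]
    have e2 : lam * d / (1 + lam) ≤ lam * d / (1 + lam * d) := by gcongr
    have e3 : lam * d / (1 + lam * d) = 1 - 1 / (1 + lam * d) := by field_simp; ring
    linarith
  have h2 : y * (1 - Real.exp (-(lam * d))) * Real.exp (-y) ≤
      Real.exp (-(v * (subexpWeight c lam α k * Real.exp (-(lam * d))))) - Real.exp (-y) := by
    have e1 : -((v : ℝ) * (subexpWeight c lam α k * Real.exp (-(lam * d))))
        = y * (1 - Real.exp (-(lam * d))) + -y := by rw [hy]; ring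
    rw [e1, Real.exp_add]
    have := Real.add_one_le_exp (y * (1 - Real.exp (-(lam * d))))
    nlinarith [Real.exp_pos (-y)]
  have h3 : 1 ≤ (1 + lam) / (lam * α) * ((k : ℝ) + 1) ^ (1 - α) *
      (1 - Real.exp (-(lam * d))) := by
    have e1 : lam * (α * ((k : ℝ) + 1) ^ (α - 1)) / (1 + lam) ≤ 1 - Real.exp (-(lam * d)) :=
      le_trans (by gcongr) h1
    have e2 : ((k : ℝ) + 1) ^ (1 - α) * ((k : ℝ) + 1) ^ (α - 1) = 1 := by
      rw [← Real.rpow_add hk1]; simp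
    calc (1 : ℝ) = ((k : ℝ) + 1) ^ (1 - α) * ((k : ℝ) + 1) ^ (α - 1) := e2.symm
      _ = (1 + lam) / (lam * α) * ((k : ℝ) + 1) ^ (1 - α) *
        (lam * (α * ((k : ℝ) + 1) ^ (α - 1)) / (1 + lam)) := by field_simp
      _ ≤ _ := by gcongr
  calc y * Real.exp (-y) ≤ y * Real.exp (-y) * ((1 + lam) / (lam * α) *
        ((k : ℝ) + 1) ^ (1 - α) * (1 - Real.exp (-(lam * d)))) :=
        le_mul_of_one_le_right (by positivity) h3
    _ = (1 + lam) / (lam * α) * ((k : ℝ) + 1) ^ (1 - α) *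
        (y * (1 - Real.exp (-(lam * d))) * Real.exp (-y)) := by ring
    _ ≤ _ := by gcongr

/-! ### Upper bound -/

lemma tailIdx_upper_s13
    (p : ℕ → ℝ) (hp : ∀ k, 0 ≤ p k) (hp1 : ∀ k, p k ≤ 1)
    (c lam α : ℝ) (hc : 0 < c) (hlam : 0 < lam) (hα : 0 < α) (hα1 : α < 1)
    (k₀ : ℕ) (hsub : ∀ k, k₀ ≤ k → p k = subexpWeight c lam α k) :
    ∃ C : ℝ, ∀ᶠ v : ℕ in atTop, tailIdx p v ≤ C * (Real.log v) ^ (1 / α - 1) := by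
  have hsum := summable_exp_neg_rpow hα (half_pos hlam)
  set S := ∑' k : ℕ, Real.exp (-(lam / 2) * (k : ℝ) ^ α) with hS
  have hS0 : 0 ≤ S := tsum_nonneg fun _ => (Real.exp_pos _).le
  set A := (1 + lam) / (lam * α) with hA
  have hA0 : 0 < A := by positivity
  set B := ((2 / lam) ^ (1 / α) + 1) ^ (1 - α) with hB
  have hlog : Tendsto (fun v : ℕ => Real.log v) atTop atTop :=
    Real.tendsto_log_atTop.comp tendsto_natCast_atTop_atTop
  refine ⟨k₀ + A * B + c * S, ?_⟩
  filter_upwards [hlog.eventually_ge_atTop 1, eventually_ge_atTop 1] with v hL hv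
  have hv0 : (0 : ℝ) < v := by exact_mod_cast hv
  set L := Real.log v with hLdef
  have hLβ : 1 ≤ L ^ (1 / α - 1) :=
    Real.one_le_rpow hL (by have := (one_le_div hα).2 hα1.le; linarith)
  set R := (2 * L / lam) ^ (1 / α) with hR
  have hR0 : 0 ≤ R := by positivity
  have hM : (R + 1) ^ (1 - α) ≤ B * L ^ (1 / α - 1) := by
    have e1 : R + 1 ≤ ((2 / lam) ^ (1 / α) + 1) * L ^ (1 / α) := by
      have : R = (2 / lam) ^ (1 / α) * L ^ (1 / α) := by
        rw [hR, ← Real.mul_rpow (by positivity) (by positivity)]; congr 1; ring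
      have h1 : 1 ≤ L ^ (1 / α) := Real.one_le_rpow hL (by positivity)
      rw [this]; linarith
    calc (R + 1) ^ (1 - α) ≤ (((2 / lam) ^ (1 / α) + 1) * L ^ (1 / α)) ^ (1 - α) := by
          apply Real.rpow_le_rpow (by positivity) e1; linarith
      _ = B * L ^ (1 / α - 1) := by
          rw [Real.mul_rpow (by positivity) (by positivity),
            ← Real.rpow_mul (by linarith : (0 : ℝ) ≤ L)]
          congr 2
          field_simp
  set E : ℕ → ℝ := fun k => Real.exp (-(v * subexpWeight c lam α k)) with hE
  have hEinc : ∀ k, 0 ≤ E (k + 1) - E k := by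
    intro k
    by_contra! h
    have h1 := term_le_increment hc hlam hα hα1 v k
    have h2 : 0 ≤ (v : ℝ) * subexpWeight c lam α k *
        Real.exp (-(v * subexpWeight c lam α k)) := by unfold subexpWeight; positivity
    have h3 : 0 < A * ((k : ℝ) + 1) ^ (1 - α) := by positivity
    have h4 := mul_neg_of_pos_of_neg h3 h
    simp only [hE] at h4
    linarith
  have hterm : ∀ k, (v : ℝ) * (p k * (1 - p k) ^ v) ≤
      (if k < k₀ then 1 else 0) + A * (R + 1) ^ (1 - α) * (E (k + 1) - E k)
        + c * Real.exp (-(lam / 2) * (k : ℝ) ^ α) := by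
    intro k
    have t2 : 0 ≤ A * (R + 1) ^ (1 - α) * (E (k + 1) - E k) :=
      mul_nonneg (by positivity) (hEinc k)
    have t3 : 0 ≤ c * Real.exp (-(lam / 2) * (k : ℝ) ^ α) := by positivity
    have hle : (v : ℝ) * (p k * (1 - p k) ^ v) ≤ v * p k * Real.exp (-(v * p k)) := by
      rw [← mul_assoc]
      exact mul_le_mul_of_nonneg_left (one_sub_pow_le_exp (hp1 k) v)
        (mul_nonneg hv0.le (hp k))
    refine hle.trans ?_
    by_cases hk : k < k₀
    · rw [if_pos hk]
      linarith [mul_exp_neg_le_one (v * p k)]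
    rw [if_neg hk, hsub k (not_lt.1 hk)]
    -- the threshold `R` is the point where `λ R^α = 2 L`, past which `v ≤ exp(λ k^α / 2)`
    by_cases hkR : (k : ℝ) ≤ R
    · have h1 := term_le_increment hc hlam hα hα1 v k
      have h2 : A * ((k : ℝ) + 1) ^ (1 - α) * (E (k + 1) - E k) ≤
          A * (R + 1) ^ (1 - α) * (E (k + 1) - E k) := by
        apply mul_le_mul_of_nonneg_right _ (hEinc k)
        apply mul_le_mul_of_nonneg_left _ hA0.le
        apply Real.rpow_le_rpow (by positivity) (by linarith) (by linarith)
      simp only [hE] at h2 t2 ⊢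
      linarith
    · have h1 : 2 * L ≤ lam * (k : ℝ) ^ α := by
        have e1 : R ^ α ≤ (k : ℝ) ^ α := Real.rpow_le_rpow hR0 (not_le.1 hkR).le hα.le
        rw [hR, ← Real.rpow_mul (by positivity), one_div_mul_cancel hα.ne', Real.rpow_one,
          div_le_iff₀ hlam] at e1
        linarith
      have h2 : (v : ℝ) * subexpWeight c lam α k ≤
          c * Real.exp (-(lam / 2) * (k : ℝ) ^ α) := by
        have e1 : (v : ℝ) = Real.exp L := (Real.exp_log hv0).symm
        unfold subexpWeight
        rw [e1, mul_left_comm, ← Real.exp_add]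
        apply mul_le_mul_of_nonneg_left _ hc.le
        apply Real.exp_le_exp.2
        linarith
      have h3 : (v : ℝ) * subexpWeight c lam α k * Real.exp (-(v * subexpWeight c lam α k))
          ≤ v * subexpWeight c lam α k := by
        have : 0 ≤ (v : ℝ) * subexpWeight c lam α k := by unfold subexpWeight; positivity
        exact mul_le_of_le_one_right this (Real.exp_le_one_iff.2 (by linarith))
      linarith
  have hbound : tailIdx p v ≤ k₀ + A * (R + 1) ^ (1 - α) + c * S := by
    unfold tailIdx zetaIdx
    rw [← tsum_mul_left]
    refine Real.tsum_le_of_sum_range_le (fun k => ?_) fun n => ?_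
    · have := hp1 k
      exact mul_nonneg hv0.le (mul_nonneg (hp k) (pow_nonneg (by linarith) v))
    refine (Finset.sum_le_sum fun k _ => hterm k).trans ?_
    rw [Finset.sum_add_distrib, Finset.sum_add_distrib, ← Finset.mul_sum, ← Finset.mul_sum,
      Finset.sum_range_sub]
    have e1 : ∑ k ∈ Finset.range n, (if k < k₀ then (1 : ℝ) else 0) ≤ k₀ := by
      rw [Finset.sum_boole]
      have : (Finset.range n).filter (· < k₀) ⊆ Finset.range k₀ := by
        intro k hk
        simp only [Finset.mem_filter, Finset.mem_range] at hk ⊢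
        exact hk.2
      have := Finset.card_le_card this
      rw [Finset.card_range] at this
      exact_mod_cast this
    have e2 : E n - E 0 ≤ 1 := by
      have a1 : E n ≤ 1 := by
        have : 0 ≤ (v : ℝ) * subexpWeight c lam α n := by unfold subexpWeight; positivity
        exact Real.exp_le_one_iff.2 (by linarith)
      have a2 : 0 < E 0 := Real.exp_pos _
      linarith
    have e3 : A * (R + 1) ^ (1 - α) * (E n - E 0) ≤ A * (R + 1) ^ (1 - α) :=
      mul_le_of_le_one_right (by positivity) e2
    have e4 : c * ∑ k ∈ Finset.range n, Real.exp (-(lam / 2) * (k : ℝ) ^ α) ≤ c * S :=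
      mul_le_mul_of_nonneg_left (hsum.sum_le_tsum _ fun _ _ => (Real.exp_pos _).le) hc.le
    linarith
  calc tailIdx p v ≤ k₀ + A * (R + 1) ^ (1 - α) + c * S := hbound
    _ ≤ k₀ * L ^ (1 / α - 1) + A * (B * L ^ (1 / α - 1)) + c * S * L ^ (1 / α - 1) := by
        have e1 : (k₀ : ℝ) ≤ k₀ * L ^ (1 / α - 1) := le_mul_of_one_le_right (by positivity) hLβ
        have e2 : c * S ≤ c * S * L ^ (1 / α - 1) := le_mul_of_one_le_right (by positivity) hLβ
        have e3 := mul_le_mul_of_nonneg_left hM hA0.le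
        linarith
    _ = _ := by ring

/-! ### Lower bound -/

lemma tailIdx_lower_s13
    (p : ℕ → ℝ) (hp : ∀ k, 0 ≤ p k) (hp1 : ∀ k, p k ≤ 1) (hps : Summable p)
    (c lam α : ℝ) (hc : 0 < c) (hlam : 0 < lam) (hα : 0 < α) (hα1 : α < 1)
    (k₀ : ℕ) (hk₀ : 1 ≤ k₀) (hsub : ∀ k, k₀ ≤ k → p k = subexpWeight c lam α k) :
    ∃ C : ℝ, 0 < C ∧ ∀ᶠ v : ℕ in atTop, C * (Real.log v) ^ (1 / α - 1) ≤ tailIdx p v := by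
  have hlog : Tendsto (fun v : ℕ => Real.log v) atTop atTop :=
    Real.tendsto_log_atTop.comp tendsto_natCast_atTop_atTop
  have hroot : Tendsto (fun v : ℕ => (Real.log v / (2 * lam)) ^ (1 / α)) atTop atTop :=
    (tendsto_rpow_atTop (by positivity)).comp (hlog.atTop_div_const (by positivity))
  refine ⟨(2 * lam)⁻¹ ^ (1 / α - 1) * (Real.exp (-lam) / (4 * lam)), by positivity, ?_⟩
  filter_upwards [hlog.eventually_ge_atTop 1, hlog.eventually_ge_atTop (-2 * Real.log (2 * c)),
    hroot.eventually_ge_atTop (k₀ : ℝ), eventually_ge_atTop 1] with v hL hL2 hLk hv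
  have hv0 : (0 : ℝ) < v := by exact_mod_cast hv
  set L := Real.log v with hLdef
  have hve : (v : ℝ) = Real.exp L := (Real.exp_log hv0).symm
  have hce : c = Real.exp (Real.log (2 * c)) / 2 := by
    rw [Real.exp_log (by positivity)]; ring
  -- `x` is the real solution of `v q x = 1/2`
  set x := ((L + Real.log (2 * c)) / lam) ^ (1 / α) with hx
  have hbase : L / (2 * lam) ≤ (L + Real.log (2 * c)) / lam := by
    rw [div_le_div_iff₀ (by positivity) hlam]
    nlinarith
  have hbase0 : 0 < L / (2 * lam) := by positivity
  have hxlow : (L / (2 * lam)) ^ (1 / α) ≤ x := Real.rpow_le_rpow hbase0.le hbase (by positivity)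
  have hx0 : 0 ≤ x := le_trans (by positivity) hxlow
  have hxα : lam * x ^ α = L + Real.log (2 * c) := by
    rw [hx, ← Real.rpow_mul (by linarith), one_div_mul_cancel hα.ne', Real.rpow_one]
    field_simp
  set K := ⌈x⌉₊ with hKdef
  have hxK : x ≤ K := Nat.le_ceil x
  have hKx : (K : ℝ) ≤ x + 1 := (Nat.ceil_lt_add_one hx0).le
  have hKk : k₀ ≤ K := by
    have : (k₀ : ℝ) ≤ K := by linarith
    exact_mod_cast this
  have hvq : ∀ k : ℕ, (v : ℝ) * subexpWeight c lam α k =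
      Real.exp (L + Real.log (2 * c) - lam * (k : ℝ) ^ α) / 2 := by
    intro k
    have : L + Real.log (2 * c) - lam * (k : ℝ) ^ α =
        L + (Real.log (2 * c) + -lam * (k : ℝ) ^ α) := by ring
    rw [this, Real.exp_add, Real.exp_add, ← hve, Real.exp_log (by positivity)]
    unfold subexpWeight
    ring
  have hqK : Real.exp (-lam) / 2 ≤ v * subexpWeight c lam α K := by
    rw [hvq]
    have e1 : (K : ℝ) ^ α ≤ x ^ α + 1 :=
      (Real.rpow_le_rpow (by positivity) hKx hα.le).trans (add_one_rpow_le hα hα1 hx0)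
    have e2 : -lam ≤ L + Real.log (2 * c) - lam * (K : ℝ) ^ α := by
      have := mul_le_mul_of_nonneg_left e1 hlam.le
      linarith
    have := Real.exp_le_exp.2 e2
    linarith
  have hhalf : ∀ n : ℕ, subexpWeight c lam α (K + n) / 2 ≤ p (K + n) * (1 - p (K + n)) ^ v := by
    intro n
    have hle : x ≤ ((K + n : ℕ) : ℝ) := by
      push_cast
      have : (0 : ℝ) ≤ n := Nat.cast_nonneg n
      linarith
    have e1 : (v : ℝ) * p (K + n) ≤ 1 / 2 := by
      rw [hsub _ (by omega), hvq]
      have := mul_le_mul_of_nonneg_left (Real.rpow_le_rpow hx0 hle hα.le) hlam.le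
      have := Real.exp_le_one_iff.2
        (by linarith : L + Real.log (2 * c) - lam * ((K + n : ℕ) : ℝ) ^ α ≤ 0)
      linarith
    have e2 : 1 + (v : ℝ) * -p (K + n) ≤ (1 + -p (K + n)) ^ v :=
      one_add_mul_le_pow (by linarith [hp1 (K + n)]) v
    rw [← sub_eq_add_neg] at e2
    rw [← hsub _ (by omega)]
    have := mul_le_mul_of_nonneg_left (show (1 / 2 : ℝ) ≤ (1 - p (K + n)) ^ v by linarith)
      (hp (K + n))
    linarith
  have hnn : ∀ k, 0 ≤ p k * (1 - p k) ^ v := fun k =>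
    mul_nonneg (hp k) (pow_nonneg (by linarith [hp1 k]) v)
  have hsm : Summable fun k => p k * (1 - p k) ^ v :=
    Summable.of_nonneg_of_le hnn (fun k => mul_le_of_le_one_right (hp k)
      (pow_le_one₀ (by linarith [hp1 k]) (by linarith [hp k]))) hps
  have hsq : Summable fun n => subexpWeight c lam α (K + n) := by
    have hs : Summable (subexpWeight c lam α) := (summable_exp_neg_rpow hα hlam).mul_left c
    simpa [add_comm] using (summable_nat_add_iff K).2 hs
  have hinj : Function.Injective fun n : ℕ => K + n := add_right_injective K
  have hz : (∑' n, subexpWeight c lam α (K + n)) / 2 ≤ zetaIdx p v := by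
    unfold zetaIdx
    rw [← tsum_div_const]
    exact hsq.div_const 2 |>.tsum_le_tsum_of_inj _ hinj (fun k _ => hnn k) hhalf hsm
  have htail := tail_sum_ge hc hlam hα hα1 (hk₀.trans hKk)
  have hKpow : (2 * lam)⁻¹ ^ (1 / α - 1) * L ^ (1 / α - 1) ≤ (K : ℝ) ^ (1 - α) := by
    calc (2 * lam)⁻¹ ^ (1 / α - 1) * L ^ (1 / α - 1)
        = ((L / (2 * lam)) ^ (1 / α)) ^ (1 - α) := by
          rw [← Real.mul_rpow (by positivity) (by linarith), ← Real.rpow_mul hbase0.le]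
          congr 1
          · ring
          · field_simp
      _ ≤ (K : ℝ) ^ (1 - α) := Real.rpow_le_rpow (by positivity) (hxlow.trans hxK) (by linarith)
  unfold tailIdx
  calc _ = ((2 * lam)⁻¹ ^ (1 / α - 1) * L ^ (1 / α - 1)) * (Real.exp (-lam) / 2)
        / (2 * lam) := by field_simp; ring
    _ ≤ (K : ℝ) ^ (1 - α) * (v * subexpWeight c lam α K) / (2 * lam) := by gcongr
    _ = v * ((K : ℝ) ^ (1 - α) * subexpWeight c lam α K) / (2 * lam) := by ring
    _ ≤ v * (lam * ∑' n, subexpWeight c lam α (K + n)) / (2 * lam) := by gcongr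
    _ = v * ((∑' n, subexpWeight c lam α (K + n)) / 2) := by field_simp
    _ ≤ _ := by gcongr

/-! ### Two-sided bound -/

/-- If `p_k = c exp(-λ k^α)` for all `k ≥ k₀` (sub-exponential tail,
`λ > 0`, `α ∈ (0,1)`), then `τ_v ≍ (ln v)^{1/α - 1}`: there are constants `0 < c₁ ≤ c₂`
and an integer `V` with `c₁ (ln v)^{1/α-1} ≤ τ_v ≤ c₂ (ln v)^{1/α-1}` for all `v ≥ V`. -/
theorem tailIdx_subexpTail
    (p : ℕ → ℝ) (hp : ∀ k, 0 ≤ p k) (hsum : ∑' k, p k = 1)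
    (c lam α : ℝ) (hc : 0 < c) (hlam : 0 < lam) (hα : 0 < α) (hα1 : α < 1)
    (k₀ : ℕ) (hk₀ : 1 ≤ k₀)
    (hsub : ∀ k, k₀ ≤ k → p k = c * Real.exp (-lam * (k : ℝ) ^ α)) :
    ∃ c₁ c₂ : ℝ, ∃ V : ℕ, 0 < c₁ ∧ c₁ ≤ c₂ ∧
      ∀ v : ℕ, V ≤ v →
        c₁ * (Real.log v) ^ (1 / α - 1) ≤ tailIdx p v ∧
        tailIdx p v ≤ c₂ * (Real.log v) ^ (1 / α - 1) := by
  have hps : Summable p := by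
    by_contra h
    rw [tsum_eq_zero_of_not_summable h] at hsum
    exact zero_ne_one hsum
  have hp1 : ∀ k, p k ≤ 1 := fun k => hsum ▸ hps.le_tsum k fun j _ => hp j
  obtain ⟨C₁, hC₁, h₁⟩ := tailIdx_lower_s13 p hp hp1 hps c lam α hc hlam hα hα1 k₀ hk₀ hsub
  obtain ⟨C₂, h₂⟩ := tailIdx_upper_s13 p hp hp1 c lam α hc hlam hα hα1 k₀ hsub
  obtain ⟨V, hV⟩ := eventually_atTop.1 (h₁.and h₂)
  refine ⟨C₁, max C₁ C₂, V, hC₁, le_max_left _ _, fun v hv => ⟨(hV v hv).1, ?_⟩⟩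
  refine (hV v hv).2.trans (mul_le_mul_of_nonneg_right (le_max_right _ _) ?_)
  exact Real.rpow_nonneg (Real.log_natCast_nonneg v) _
end
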